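/- Let G be a group and let φ₁ : H₁ → G and φ₂ : H₂ → G be conjugate partial endomorphisms of G. Then the monoids M(φ₁) and M(φ₂) are isomorphic. -/

import Mathlib

/-!
The isomorphism fixes `G` and sends the stable letter `t` to `a t b`; its inverse sends `t` to
`a⁻¹ t b⁻¹`. The assignment respects the HNN-relations because, for `h ∈ H₁`, in `M(φ₂)`
`h (a t b) = a (a⁻¹ h a) t b = a t φ₂(a⁻¹ h a) b = a t b φ₁(h)`. Conjugacy is symmetric, with
`a⁻¹`, `b⁻¹` in place of `a`, `b`, so the same lemma `exists_conjHom` gives both maps, and they are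
mutually inverse by checking generators (`hom_eq_id`).
-/

universe u v

/-- The principal right ideal `aM` of a monoid. -/
def prIdeal {M : Type*} [Monoid M] (a : M) : Set M := Set.range fun m => a * m

/-- A left Rees monoid: a left cancellative, right rigid monoid in which every principal
right ideal is contained in only finitely many distinct principal right ideals. -/
def IsLeftReesMonoid (M : Type*) [Monoid M] : Prop :=
  (∀ a b c : M, a * b = a * c → b = c) ∧
  (∀ a b : M, (prIdeal a ∩ prIdeal b).Nonempty →
    prIdeal a ⊆ prIdeal b ∨ prIdeal b ⊆ prIdeal a) ∧
  (∀ a : M, {S : Set M | (∃ b : M, S = prIdeal b) ∧ prIdeal a ⊆ S}.Finite)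

/-- The defining relations of the monoid HNN-extension
`⟨G, tᵢ (i ∈ I) | relations of G, h tᵢ = tᵢ ρᵢ(h) for h ∈ Hᵢ⟩`. -/
inductive HNNRel (G : Type u) [Group G] {I : Type v} (H : I → Subgroup G)
    (ρ : ∀ i, H i →* G) : FreeMonoid (G ⊕ I) → FreeMonoid (G ⊕ I) → Prop
  | mul (g h : G) : HNNRel G H ρ
      (FreeMonoid.of (Sum.inl g) * FreeMonoid.of (Sum.inl h))
      (FreeMonoid.of (Sum.inl (g * h)))
  | one : HNNRel G H ρ (FreeMonoid.of (Sum.inl (1 : G))) 1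
  | hnn (i : I) (h : H i) : HNNRel G H ρ
      (FreeMonoid.of (Sum.inl (h : G)) * FreeMonoid.of (Sum.inr i))
      (FreeMonoid.of (Sum.inr i) * FreeMonoid.of (Sum.inl (ρ i h)))

/-- The monoid HNN-extension of `G` with associated subgroups `Hᵢ`, homomorphisms `ρᵢ`
and stable letters `tᵢ`. -/
abbrev HNNMonoid (G : Type u) [Group G] {I : Type v} (H : I → Subgroup G)
    (ρ : ∀ i, H i →* G) :=
  (conGen (HNNRel G H ρ)).Quotient

/-- The monoid HNN-extension `M(φ)` with a single stable letter. -/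
abbrev SingleHNN {G : Type u} [Group G] {H : Subgroup G} (φ : H →* G) :=
  HNNMonoid G (fun _ : PUnit.{v + 1} => H) (fun _ => φ)

namespace SingleHNN

universe w

variable {G : Type u} [Group G] {H : Subgroup G} (φ : H →* G)

/-- The canonical homomorphism from the base group `G` to `M(φ)`. -/
def base : G →* SingleHNN.{u, v} φ where
  toFun g := (conGen _).mk' (FreeMonoid.of (Sum.inl g))
  map_one' := (Con.eq _).2 (ConGen.Rel.of _ _ HNNRel.one)
  map_mul' g h := ((Con.eq _).2 (ConGen.Rel.of _ _ (HNNRel.mul g h))).symm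

/-- The stable letter `t` of `M(φ)`. -/
def stable : SingleHNN.{u, v} φ := (conGen _).mk' (FreeMonoid.of (Sum.inr PUnit.unit))

theorem base_mul_stable (h : H) :
    base.{u, v} φ h * stable φ = stable φ * base φ (φ h) :=
  (Con.eq _).2 (ConGen.Rel.of _ _
    (HNNRel.hnn (H := fun _ : PUnit.{v + 1} => H) (ρ := fun _ => φ) PUnit.unit h))

/-- The universal property of `M(φ)`: existence of the induced homomorphism. -/
theorem exists_lift {M : Type*} [Monoid M] (f : G →* M) (τ : M)
    (hτ : ∀ h : H, f h * τ = τ * f (φ h)) :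
    ∃ F : SingleHNN.{u, v} φ →* M, (∀ g, F (base φ g) = f g) ∧ F (stable φ) = τ := by
  refine ⟨Con.lift _ (FreeMonoid.lift (Sum.elim f fun _ => τ)) (Con.conGen_le.2 ?_), ?_, ?_⟩
  · intro x y hxy
    cases hxy with
    | mul g h => simp [Con.ker_rel]
    | one => simp [Con.ker_rel]
    | hnn i h => simpa [Con.ker_rel] using hτ h
  · intro g
    simp [base]
  · simp [stable]

/-- An endomorphism of `M(φ)` fixing `G` and the stable letter is the identity. -/
theorem hom_eq_id (F : SingleHNN.{u, v} φ →* SingleHNN.{u, v} φ)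
    (hg : ∀ g, F (base φ g) = base φ g) (ht : F (stable φ) = stable φ) :
    F = MonoidHom.id _ := by
  refine Con.hom_ext (FreeMonoid.hom_eq ?_)
  rintro (g | ⟨⟩)
  · exact hg g
  · exact ht

/-- Conjugacy data `a`, `b`, required only in one direction (`α(H) ⊆ K` rather than equality),
induce a homomorphism `M(φ) → M(ψ)` over `G` with `t ↦ a t b`. -/
theorem exists_conjHom {K : Subgroup G} (ψ : K →* G) (a b : G)
    (hc : ∀ h : H, ∃ k : K, (k : G) = a⁻¹ * h * a ∧ ψ k = b * φ h * b⁻¹) :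
    ∃ F : SingleHNN.{u, v} φ →* SingleHNN.{u, w} ψ, (∀ g, F (base φ g) = base ψ g) ∧
      F (stable φ) = base ψ a * stable ψ * base ψ b := by
  refine exists_lift φ (base ψ) _ fun h => ?_
  obtain ⟨k, hk, hψ⟩ := hc h
  have h1 : (h : G) * a = a * k := by rw [hk]; group
  have h2 : ψ k * b = b * φ h := by rw [hψ]; group
  calc base ψ h * (base ψ a * stable ψ * base ψ b)
      = base ψ (h * a) * stable ψ * base ψ b := by simp only [map_mul, mul_assoc]
    _ = base ψ a * (base ψ k * stable ψ) * base ψ b := by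
        rw [h1]; simp only [map_mul, mul_assoc]
    _ = base ψ a * stable ψ * base ψ (ψ k * b) := by
        rw [base_mul_stable]; simp only [map_mul, mul_assoc]
    _ = base ψ a * stable ψ * base ψ b * base ψ (φ h) := by
        rw [h2]; simp only [map_mul, mul_assoc]

/-- The homomorphisms `t ↦ a t b` and `t ↦ a⁻¹ t b⁻¹` cancel. -/
theorem comp_eq_id {K : Subgroup G} (ψ : K →* G) (a b : G)
    (F : SingleHNN.{u, v} φ →* SingleHNN.{u, w} ψ) (E : SingleHNN.{u, w} ψ →* SingleHNN.{u, v} φ)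
    (hF : ∀ g, F (base φ g) = base ψ g) (hFt : F (stable φ) = base ψ a * stable ψ * base ψ b)
    (hE : ∀ g, E (base ψ g) = base φ g)
    (hEt : E (stable ψ) = base φ a⁻¹ * stable φ * base φ b⁻¹) :
    E.comp F = MonoidHom.id _ := by
  refine hom_eq_id φ _ (fun g => by simp [hF, hE]) ?_
  calc E (F (stable φ))
      = base φ a * (base φ a⁻¹ * stable φ * base φ b⁻¹) * base φ b := by
        simp only [hFt, map_mul, hE, hEt]
    _ = base φ (a * a⁻¹) * stable φ * base φ (b⁻¹ * b) := by simp only [map_mul, mul_assoc]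
    _ = stable φ := by simp

/-- `stmt10` with its universes named: the two one-element index types of stable letters lie in
independent universes `v` and `w`, which therefore also stay separate in the lemmas above. -/
theorem nonempty_mulEquiv {H₁ H₂ : Subgroup G} (φ₁ : H₁ →* G) (φ₂ : H₂ →* G) (a b : G)
    (hα : ∀ g : G, g ∈ H₁ ↔ a⁻¹ * g * a ∈ H₂)
    (hβ : ∀ (h : G) (hh : h ∈ H₁),
      b * φ₁ ⟨h, hh⟩ * b⁻¹ = φ₂ ⟨a⁻¹ * h * a, (hα h).mp hh⟩) :
    Nonempty (SingleHNN.{u, v} φ₁ ≃* SingleHNN.{u, w} φ₂) := by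
  obtain ⟨F, hF, hFt⟩ := exists_conjHom.{u, v, w} φ₁ φ₂ a b fun h =>
    ⟨⟨a⁻¹ * h * a, (hα h).mp h.2⟩, rfl, (hβ h h.2).symm⟩
  obtain ⟨E, hE, hEt⟩ := exists_conjHom.{u, w, v} φ₂ φ₁ a⁻¹ b⁻¹ fun k => by
    have e : a⁻¹ * (a * k * a⁻¹) * a = (k : G) := by group
    have hk : a * k * a⁻¹ ∈ H₁ := (hα _).mpr (e.symm ▸ k.2)
    refine ⟨⟨a * k * a⁻¹, hk⟩, by simp, ?_⟩
    have hφ := hβ _ hk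
    simp only [e, Subtype.coe_eta] at hφ
    rw [← hφ]
    group
  exact ⟨MonoidHom.toMulEquiv F E
    (comp_eq_id φ₁ φ₂ a b F E hF hFt hE hEt)
    (comp_eq_id φ₂ φ₁ a⁻¹ b⁻¹ E F hE hEt hF (by simpa using hFt))⟩

end SingleHNN

/-- conjugate partial endomorphisms `φ₁ : H₁ → G`, `φ₂ : H₂ → G` (conjugate
via inner automorphisms `α(g) = a⁻¹ g a`, `β(g) = b g b⁻¹` with `α(H₁) = H₂` and
`β ∘ φ₁ = φ₂ ∘ α`) have isomorphic monoid HNN-extensions `M(φ₁) ≅ M(φ₂)`. -/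
theorem stmt10 (G : Type u) [Group G] (H₁ H₂ : Subgroup G) (φ₁ : H₁ →* G) (φ₂ : H₂ →* G)
    (a b : G)
    (hα : ∀ g : G, g ∈ H₁ ↔ a⁻¹ * g * a ∈ H₂)
    (hβ : ∀ (h : G) (hh : h ∈ H₁),
      b * φ₁ ⟨h, hh⟩ * b⁻¹ = φ₂ ⟨a⁻¹ * h * a, (hα h).mp hh⟩) :
    Nonempty (HNNMonoid G (fun _ : PUnit => H₁) (fun _ => φ₁) ≃*
      HNNMonoid G (fun _ : PUnit => H₂) (fun _ => φ₂)) :=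
  SingleHNN.nonempty_mulEquiv φ₁ φ₂ a b hα hβ
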